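/- arXiv:1511.00938 — 9 statements merged into one kernel-verified Lean document; each statement's English description precedes it below -/
import Mathlib

section
/- Let σ be a finite alphabet, let $ be a symbol not in σ, and let L ⊆ σ* be any language. Over the alphabet σ ∪ {$}, let V be the view consisting of the single path query V₁ defined by the language $·L·$ (all words $w$ with w ∈ L), and let Q be the path query defined by the language $·σ*·$. Then V determines Q if and only if L = σ* (i.e., L is universal over σ). -/
/-!
If `L = σ*`, the view and the query coincide. Otherwise pick `u ∉ L` and compare the simple path
labelled `$u$` with the edgeless database on the same nodes. The query holds between the endpoints
of the former and nowhere in the latter. The view is empty on both: a label of a path in the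
simple path is a factor of `$u$`, and since `u` contains no `$`, the only factor of the form `$v$`
is `$u$` itself (`eq_of_drop_eq`), which is not in `$·L·$`.
-/

/-- A graph database over alphabet `σ`: a finite set of nodes (drawn from `ℕ`)
together with a binary edge relation for each letter of `σ`. -/
structure GDB (σ : Type) where
  nodes : Finset ℕ
  edge : σ → ℕ → ℕ → Prop
  edge_mem : ∀ a x y, edge a x y → x ∈ nodes ∧ y ∈ nodes

/-- `D.HasPath x w y`: there is a path from `x` to `y` in `D` whose label is `w`. -/
inductive GDB.HasPath {σ : Type} (D : GDB σ) : ℕ → List σ → ℕ → Prop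
  | nil {x : ℕ} : x ∈ D.nodes → GDB.HasPath D x [] x
  | cons {x y z : ℕ} {a : σ} {w : List σ} :
      D.edge a x y → GDB.HasPath D y w z → GDB.HasPath D x (a :: w) z

/-- The path query defined by a language `L`: pairs of nodes connected by a
path whose label belongs to `L`. -/
def pathQuery {σ : Type} (L : Set (List σ)) (D : GDB σ) (x y : ℕ) : Prop :=
  ∃ w ∈ L, D.HasPath x w y

/-- The language `$·L·$` over the alphabet `σ ∪ {$}`, where `$` is encoded as
`Option.none` and letters of `σ` as `Option.some`. -/
def dollarLang {σ : Type} (L : Set (List σ)) : Set (List (Option σ)) :=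
  {w | ∃ u ∈ L, w = Option.none :: u.map Option.some ++ [Option.none]}

/-- The simple path on the nodes `0, …, |W|` whose consecutive edges spell the word `W`. -/
def wordGDB {τ : Type} (W : List τ) : GDB τ where
  nodes := Finset.range (W.length + 1)
  edge a x y := y = x + 1 ∧ W[x]? = some a
  edge_mem := by
    rintro a x y ⟨rfl, h⟩
    obtain ⟨h, -⟩ := List.getElem?_eq_some_iff.mp h
    simp only [Finset.mem_range]
    omega

/-- The edgeless database on the nodes `0, …, n`. -/
def edgelessGDB (τ : Type) (n : ℕ) : GDB τ where
  nodes := Finset.range (n + 1)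
  edge _ _ _ := False
  edge_mem := by simp

theorem wordGDB_hasPath_drop {τ : Type} (W w : List τ) :
    ∀ x, x ≤ W.length → W.drop x = w → (wordGDB W).HasPath x w W.length := by
  induction w with
  | nil =>
    intro x hx h
    have : x = W.length := le_antisymm hx (List.drop_eq_nil_iff.mp h)
    subst this
    exact .nil (by simp [wordGDB])
  | cons a w ih =>
    intro x hx h
    have hlt : x < W.length := by
      by_contra hc
      rw [List.drop_eq_nil_of_le (by omega)] at h
      cases h
    rw [List.drop_eq_getElem_cons hlt] at h
    injection h with h₁ h₂
    exact .cons (y := x + 1) ⟨rfl, by rw [List.getElem?_eq_getElem hlt, h₁]⟩ (ih _ hlt h₂)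

theorem wordGDB_drop_eq_of_hasPath {τ : Type} {W w : List τ} {x y : ℕ}
    (h : (wordGDB W).HasPath x w y) : ∃ s, W.drop x = w ++ s := by
  induction h with
  | nil _ => exact ⟨_, rfl⟩
  | cons e _ ih =>
    obtain ⟨rfl, e⟩ := e
    obtain ⟨s, hs⟩ := ih
    obtain ⟨hlt, e⟩ := List.getElem?_eq_some_iff.mp e
    exact ⟨s, by rw [List.drop_eq_getElem_cons hlt, e, hs, List.cons_append]⟩

theorem eq_of_map_some_append {σ : Type} (u : List σ) :
    ∀ (v : List σ) (s : List (Option σ)),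
      u.map some ++ [none] = v.map some ++ none :: s → u = v := by
  induction u with
  | nil => intro v s h; cases v <;> simp_all
  | cons a u ih =>
    intro v s h
    cases v with
    | nil => simp at h
    | cons b v =>
      simp only [List.map_cons, List.cons_append, List.cons.injEq, Option.some.injEq] at h
      rw [h.1, ih v s h.2]

/-- The only factor of `$u$` of the form `$v$` is `$u$` itself. -/
theorem eq_of_drop_eq {σ : Type} (u v : List σ) (x : ℕ) (s : List (Option σ))
    (h : (none :: u.map some ++ [none]).drop x = (none :: v.map some ++ [none]) ++ s) :
    u = v := by
  classical
  cases x with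
  | zero => exact eq_of_map_some_append u v s (by simpa using h)
  | succ x =>
    exfalso
    -- Past its first letter `$u$` contains only one `$`.
    have h₁ := ((u.map some ++ [none]).drop_sublist x).count_le (none : Option σ)
    have h₂ : (u.map some ++ [none]).drop x = (none :: v.map some ++ [none]) ++ s := by
      simpa using h
    rw [h₂] at h₁
    have h₃ : (u.map some).count (none : Option σ) = 0 := List.count_eq_zero.mpr (by simp)
    simp only [List.count_append, List.count_cons, List.cons_append, h₃, List.count_nil,
      beq_self_eq_true, if_true] at h₁
    omega

theorem not_pathQuery_edgelessGDB {σ : Type} (L : Set (List σ)) (n x y : ℕ) :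
    ¬ pathQuery (dollarLang L) (edgelessGDB (Option σ) n) x y := by
  rintro ⟨w, ⟨v, -, rfl⟩, h⟩
  cases h with
  | cons e _ => exact e

/-- the view `V = {V₁}` with `L(V₁) = $·L·$` determines the query
`Q` with `L(Q) = $·σ*·$` iff `L` is universal over `σ`. -/
theorem stmt0 {σ : Type} [Fintype σ] (L : Set (List σ)) :
    (∀ D D' : GDB (Option σ),
        (∀ x y, pathQuery (dollarLang L) D x y ↔ pathQuery (dollarLang L) D' x y) →
        (∀ x y, pathQuery (dollarLang (Set.univ : Set (List σ))) D x y ↔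
          pathQuery (dollarLang (Set.univ : Set (List σ))) D' x y))
    ↔ L = Set.univ := by
  constructor
  · intro h
    by_contra hL
    obtain ⟨u, hu⟩ := (Set.ne_univ_iff_exists_notMem L).mp hL
    set W : List (Option σ) := none :: u.map some ++ [none] with hW
    refine not_pathQuery_edgelessGDB Set.univ W.length 0 W.length
      ((h (wordGDB W) (edgelessGDB _ W.length) (fun x y => ?_) 0 W.length).mp
        ⟨W, ⟨u, trivial, rfl⟩, wordGDB_hasPath_drop W W 0 (Nat.zero_le _) rfl⟩)
    refine iff_of_false ?_ (not_pathQuery_edgelessGDB L _ x y)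
    rintro ⟨w, ⟨v, hv, rfl⟩, hp⟩
    obtain ⟨s, hs⟩ := wordGDB_drop_eq_of_hasPath hp
    exact hu (eq_of_drop_eq u v x s hs ▸ hv)
  · rintro rfl D D' h
    exact h
end

section
/- Let σ be a finite alphabet, let (u_i, v_i) for 1 ≤ i ≤ n and (u, v) be pairs of nonempty words over σ. Then the following are equivalent: (a) for every finite semigroup S and every semigroup homomorphism h from the free semigroup on σ to S, if h(u_i) = h(v_i) for all i, then h(u) = h(v); (b) for every finite graph database D over σ, if u_i(D) = v_i(D) for all i, then u(D) = v(D), where for a nonempty word w over σ, w(D) denotes the set of pairs of nodes of D connected by a path whose label is exactly w. -/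
/-- A nonempty word over `σ`: a head letter together with the remaining letters. -/
abbrev NEWord (σ : Type) := σ × List σ

/-- The underlying list of a nonempty word. -/
def NEWord.toList {σ : Type} (w : NEWord σ) : List σ := w.1 :: w.2

/-- The element of the free semigroup on `σ` corresponding to a nonempty word. -/
def NEWord.toFS {σ : Type} (w : NEWord σ) : FreeSemigroup σ :=
  w.2.foldl (fun acc b => acc * FreeSemigroup.of b) (FreeSemigroup.of w.1)

theorem map_toFS {σ M : Type} [Monoid M] (f : FreeSemigroup σ →ₙ* M) (w : NEWord σ) :
    f w.toFS = (w.toList.map fun a => f (FreeSemigroup.of a)).prod := by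
  obtain ⟨a, l⟩ := w
  have key : ∀ (l : List σ) (s : FreeSemigroup σ),
      f (l.foldl (fun acc b => acc * FreeSemigroup.of b) s)
        = f s * (l.map fun a => f (FreeSemigroup.of a)).prod := by
    intro l
    induction l with
    | nil => intro s; simp
    | cons b l ih => intro s; simp [ih, mul_assoc]
  simp [NEWord.toFS, NEWord.toList, key]

theorem pathQuery_singleton {σ : Type} (D : GDB σ) (w : List σ) (x y : ℕ) :
    pathQuery {w} D x y ↔ D.HasPath x w y := by
  simp [pathQuery]

theorem GDB.HasPath.mem {σ : Type} {D : GDB σ} {x y : ℕ} {w : List σ} (h : D.HasPath x w y) :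
    x ∈ D.nodes ∧ y ∈ D.nodes := by
  induction h with
  | nil hx => exact ⟨hx, hx⟩
  | cons he _ ih => exact ⟨(D.edge_mem _ _ _ he).1, ih.2⟩

/-- The action of a letter on sets of nodes: a set is sent to the set of its `a`-predecessors.
Taking predecessors rather than successors makes composition of maps agree with concatenation of
words, without reversal. -/
def preStep {σ : Type} (D : GDB σ) (a : σ) : Function.End (Set {x // x ∈ D.nodes}) :=
  fun s => {x | ∃ y ∈ s, D.edge a x.1 y.1}

theorem prod_preStep {σ : Type} (D : GDB σ) (w : List σ) (s : Set {x // x ∈ D.nodes}) :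
    (w.map (preStep D)).prod s = {x | ∃ y ∈ s, D.HasPath x.1 w y.1} := by
  induction w with
  | nil =>
    ext x
    constructor
    · intro hx
      exact ⟨x, hx, .nil x.2⟩
    · rintro ⟨y, hy, h⟩
      obtain ⟨x, hx⟩ := x
      obtain ⟨y, hy'⟩ := y
      cases h
      exact hy
  | cons a w ih =>
    have : ((a :: w).map (preStep D)).prod s = preStep D a ((w.map (preStep D)).prod s) := by
      rw [List.map_cons, List.prod_cons]; rfl
    rw [this, ih]
    ext x
    constructor
    · rintro ⟨y, ⟨z, hz, h⟩, he⟩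
      exact ⟨z, hz, .cons he h⟩
    · rintro ⟨z, hz, h⟩
      cases h with
      | @cons _ y _ _ _ he h => exact ⟨⟨y, h.mem.1⟩, ⟨z, hz, h⟩, he⟩

/-- Two words act equally on sets of nodes exactly when they define the same path query. -/
theorem prod_preStep_eq_iff {σ : Type} (D : GDB σ) (w w' : List σ) :
    (w.map (preStep D)).prod = (w'.map (preStep D)).prod ↔
      ∀ x y, pathQuery {w} D x y ↔ pathQuery {w'} D x y := by
  simp only [pathQuery_singleton]
  constructor
  · intro h
    have aux : ∀ x y : {x // x ∈ D.nodes}, D.HasPath x.1 w y.1 ↔ D.HasPath x.1 w' y.1 := by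
      intro x y
      have h1 := congrArg (fun t => x ∈ t) (congrFun h {y})
      simpa only [prod_preStep, Set.mem_ofPred_eq, Set.mem_singleton_iff, exists_eq_left,
        eq_iff_iff] using h1
    exact fun x y => ⟨fun p => (aux ⟨x, p.mem.1⟩ ⟨y, p.mem.2⟩).1 p,
      fun p => (aux ⟨x, p.mem.1⟩ ⟨y, p.mem.2⟩).2 p⟩
  · intro h
    funext s
    simp only [prod_preStep, h]

/-- The right Cayley graph of a finite monoid with respect to `c`, with an `a`-labelled edge from
`x` to `x * c a`; the elements of the monoid are coded as natural numbers by `e`. -/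
noncomputable def cayley {σ M : Type} [Monoid M] [Finite M] (e : M → ℕ) (c : σ → M) : GDB σ where
  nodes := (Set.finite_range e).toFinset
  edge a i j := ∃ x, i = e x ∧ j = e (x * c a)
  edge_mem := by
    rintro a _ _ ⟨x, rfl, rfl⟩
    simp

theorem cayley_hasPath {σ M : Type} [Monoid M] [Finite M] {e : M → ℕ}
    (he : Function.Injective e) (c : σ → M) (w : List σ) (i j : ℕ) :
    (cayley e c).HasPath i w j ↔ ∃ x, i = e x ∧ j = e (x * (w.map c).prod) := by
  induction w generalizing i with
  | nil =>
    constructor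
    · intro h
      obtain ⟨x, rfl⟩ : i ∈ Set.range e := by simpa [cayley] using h.mem.1
      cases h
      exact ⟨x, rfl, by simp⟩
    · rintro ⟨x, rfl, rfl⟩
      simpa using GDB.HasPath.nil (D := cayley e c) (x := e x) (by simp [cayley])
  | cons a w ih =>
    constructor
    · intro h
      cases h with
      | @cons _ k _ _ _ hE h =>
        obtain ⟨x, rfl, rfl⟩ := hE
        obtain ⟨y, hy, rfl⟩ := (ih _).1 h
        refine ⟨x, rfl, ?_⟩
        rw [← he hy, List.map_cons, List.prod_cons, mul_assoc]
    · rintro ⟨x, rfl, rfl⟩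
      refine .cons (y := e (x * c a)) ⟨x, rfl, rfl⟩ ((ih _).2 ⟨_, rfl, ?_⟩)
      rw [List.map_cons, List.prod_cons, mul_assoc]

/-- Two words define the same path query on the Cayley graph exactly when their values agree. -/
theorem cayley_query_iff {σ M : Type} [Monoid M] [Finite M] {e : M → ℕ}
    (he : Function.Injective e) (c : σ → M) (w w' : List σ) :
    (∀ x y, pathQuery {w} (cayley e c) x y ↔ pathQuery {w'} (cayley e c) x y) ↔
      (w.map c).prod = (w'.map c).prod := by
  simp only [pathQuery_singleton, cayley_hasPath he]
  constructor
  · intro h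
    obtain ⟨x, hx, hy⟩ := (h (e 1) (e (w.map c).prod)).1 ⟨1, rfl, by simp⟩
    rw [← he hx, one_mul] at hy
    exact he hy
  · intro h x y
    rw [h]

/-- the word problem for finite semigroups coincides with the
word problem for graph databases. -/
theorem stmt1 {σ : Type} [Fintype σ] (n : ℕ) (u v : Fin n → NEWord σ)
    (u₀ v₀ : NEWord σ) :
    (∀ (S : Type) [Semigroup S] [Finite S] (h : FreeSemigroup σ →ₙ* S),
        (∀ i, h (u i).toFS = h (v i).toFS) → h u₀.toFS = h v₀.toFS)
    ↔ (∀ D : GDB σ,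
        (∀ i, ∀ x y, pathQuery {(u i).toList} D x y ↔ pathQuery {(v i).toList} D x y) →
        (∀ x y, pathQuery {u₀.toList} D x y ↔ pathQuery {v₀.toList} D x y)) := by
  constructor
  · intro H D hD
    have : Finite (Function.End (Set {x // x ∈ D.nodes})) :=
      inferInstanceAs (Finite (Set {x // x ∈ D.nodes} → Set {x // x ∈ D.nodes}))
    have key := H (Function.End (Set {x // x ∈ D.nodes})) (FreeSemigroup.lift (preStep D))
    simp only [map_toFS, FreeSemigroup.lift_of, prod_preStep_eq_iff] at key
    exact key hD
  · intro H S _ _ h hS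
    have : Finite (WithOne S) := inferInstanceAs (Finite (Option S))
    obtain ⟨m, ⟨e⟩⟩ := Finite.exists_equiv_fin (WithOne S)
    have he : Function.Injective fun x => (e x : ℕ) := Fin.val_injective.comp e.injective
    let f : FreeSemigroup σ →ₙ* WithOne S := WithOne.coeMulHom.comp h
    have key := H (cayley (fun x => (e x : ℕ)) fun a => f (FreeSemigroup.of a))
    simp only [cayley_query_iff he, ← map_toFS] at key
    exact WithOne.coe_injective (key fun i => congrArg WithOne.coe (hS i))
end

section
/- Let σ be a finite alphabet and σ' a disjoint copy of σ, with α ↦ α' the bijection and w ↦ w' the induced map on words. Let (u_i, v_i) for 1 ≤ i ≤ n and (u, v) be pairs of nonempty words over σ. Over the alphabet σ ∪ σ', define: Q as the path query of the language {u, v'}; for each α ∈ σ, V_α as the path query of the language {α, α'}; for each i, V_i as the path query of the language {u_i, v_i'}; for each α, β ∈ σ, the query T_{α,β} mapping D to {(x,y) : (x,y) is in the α-edge relation of D and there exist nodes z, t with (z,t) in the β'-edge relation of D}, and the query T'_{α,β} mapping D to {(x,y) : (x,y) is in the α'-edge relation of D and there exist nodes z, t with (z,t) in the β-edge relation of D}.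 Let V be the view consisting of all the queries V_α, V_i, T_{α,β}, T'_{α,β}. Then V determines Q if and only if for every finite graph database E over σ: if u_i(E) = v_i(E) for all i, then u(E) = v(E). -/
/-- A word over `σ` viewed as a word over `σ ⊕ σ` using the first copy. -/
def wl {σ : Type} (w : List σ) : List (σ ⊕ σ) := w.map Sum.inl

/-- A word over `σ` viewed as a word over `σ ⊕ σ` using the second (primed) copy. -/
def wr {σ : Type} (w : List σ) : List (σ ⊕ σ) := w.map Sum.inr

theorem pathQuery_pair {τ : Type} (w₁ w₂ : List τ) (D : GDB τ) (x y : ℕ) :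
    pathQuery {w₁, w₂} D x y ↔ D.HasPath x w₁ y ∨ D.HasPath x w₂ y := by
  simp [pathQuery]

theorem pathQuery_single {τ : Type} (w : List τ) (D : GDB τ) (x y : ℕ) :
    pathQuery {w} D x y ↔ D.HasPath x w y := by
  simp [pathQuery]

theorem hasPath_letter {τ : Type} (D : GDB τ) (a : τ) (x y : ℕ) :
    D.HasPath x [a] y ↔ D.edge a x y := by
  constructor
  · rintro (_ | ⟨h, _ | _⟩)
    exact h
  · intro h
    exact .cons h (.nil (D.edge_mem _ _ _ h).2)

/-- A path whose label is nonempty transfers along an inclusion of edge relations, even when the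
node sets are unrelated. The letters of the word may be renamed differently on both sides. -/
theorem hasPath_map_of_edge {σ τ₁ τ₂ : Type} {D : GDB τ₁} {E : GDB τ₂} {f : σ → τ₁} {g : σ → τ₂}
    (h : ∀ a x y, D.edge (f a) x y → E.edge (g a) x y) (w : NEWord σ) {x y : ℕ}
    (hp : D.HasPath x (w.toList.map f) y) : E.HasPath x (w.toList.map g) y := by
  obtain ⟨a, w⟩ := w
  simp only [NEWord.toList] at hp ⊢
  induction w generalizing a x with
  | nil =>
    simp only [List.map_cons, List.map_nil, hasPath_letter] at hp ⊢
    exact h _ _ _ hp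
  | cons b w ih =>
    cases hp with
    | cons he ht => exact .cons (h _ _ _ he) (ih b ht)

theorem hasPath_map_iff {σ τ₁ τ₂ : Type} {D : GDB τ₁} {E : GDB τ₂} {f : σ → τ₁} {g : σ → τ₂}
    (h : ∀ a x y, D.edge (f a) x y ↔ E.edge (g a) x y) (w : NEWord σ) (x y : ℕ) :
    D.HasPath x (w.toList.map f) y ↔ E.HasPath x (w.toList.map g) y :=
  ⟨hasPath_map_of_edge (fun a x y => (h a x y).1) w,
    hasPath_map_of_edge (fun a x y => (h a x y).2) w⟩

theorem not_hasPath_map {σ τ : Type} {D : GDB τ} {f : σ → τ} (h : ∀ a x y, ¬ D.edge (f a) x y)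
    (w : NEWord σ) (x y : ℕ) : ¬ D.HasPath x (w.toList.map f) y := by
  intro hp
  cases hp with
  | cons he _ => exact h _ _ _ he

/-- The copy of a database along a renaming `f` of its letters; letters outside the range of `f`
get the empty edge relation. -/
def GDB.lift {σ τ : Type} (f : σ → τ) (E : GDB σ) : GDB τ where
  nodes := E.nodes
  edge c x y := ∃ a, f a = c ∧ E.edge a x y
  edge_mem := by
    rintro _ x y ⟨a, _, h⟩
    exact E.edge_mem a x y h

/-- The restriction of a database to the letters in the range of `f`, read over the domain
of `f`. -/
def GDB.proj {σ τ : Type} (f : σ → τ) (D : GDB τ) : GDB σ where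
  nodes := D.nodes
  edge a x y := D.edge (f a) x y
  edge_mem a x y h := D.edge_mem (f a) x y h

/-- If `D` has both kinds of edges, then the queries `T` and `T'` determine all its edges. -/
theorem edge_iff_of_mixed {σ : Type} {D D' : GDB (σ ⊕ σ)}
    (hT : ∀ α β : σ, ∀ x y,
      (D.edge (Sum.inl α) x y ∧ ∃ z t, D.edge (Sum.inr β) z t) ↔
        (D'.edge (Sum.inl α) x y ∧ ∃ z t, D'.edge (Sum.inr β) z t))
    (hT' : ∀ α β : σ, ∀ x y,
      (D.edge (Sum.inr α) x y ∧ ∃ z t, D.edge (Sum.inl β) z t) ↔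
        (D'.edge (Sum.inr α) x y ∧ ∃ z t, D'.edge (Sum.inl β) z t))
    (hl : ∃ α x y, D.edge (Sum.inl α) x y) (hr : ∃ β x y, D.edge (Sum.inr β) x y) :
    ∀ c x y, D.edge c x y ↔ D'.edge c x y := by
  obtain ⟨α, x₀, y₀, h₁⟩ := hl
  obtain ⟨β, z₀, t₀, h₂⟩ := hr
  have h₁' := (hT α β x₀ y₀).1 ⟨h₁, z₀, t₀, h₂⟩
  rintro (γ | γ) x y
  · exact ⟨fun h => ((hT γ β x y).1 ⟨h, z₀, t₀, h₂⟩).1,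
      fun h => ((hT γ β x y).2 ⟨h, h₁'.2⟩).1⟩
  · exact ⟨fun h => ((hT' γ α x y).1 ⟨h, x₀, y₀, h₁⟩).1,
      fun h => ((hT' γ α x y).2 ⟨h, x₀, y₀, h₁'.1⟩).1⟩

/-- If `D` has only unprimed edges, `D'` has only primed edges, and both are copies of the same
database `E`, then the query of `{p, q'}` evaluates to `p(E)` on `D` and to `q(E)` on `D'`. -/
theorem query_iff_of_copies {σ : Type} {D D' : GDB (σ ⊕ σ)} {E : GDB σ}
    (hD : ∀ α x y, ¬ D.edge (Sum.inr α) x y) (hD' : ∀ α x y, ¬ D'.edge (Sum.inl α) x y)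
    (h : ∀ α x y, D.edge (Sum.inl α) x y ↔ E.edge α x y)
    (h' : ∀ α x y, D'.edge (Sum.inr α) x y ↔ E.edge α x y) (p q : NEWord σ) (x y : ℕ) :
    (pathQuery {wl p.toList, wr q.toList} D x y ↔ pathQuery {p.toList} E x y) ∧
      (pathQuery {wl p.toList, wr q.toList} D' x y ↔ pathQuery {q.toList} E x y) := by
  have e₁ := hasPath_map_iff (g := id) h p x y
  have e₂ := hasPath_map_iff (g := id) h' q x y
  rw [List.map_id] at e₁ e₂
  have n₁ := not_hasPath_map hD q x y
  have n₂ := not_hasPath_map hD' p x y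
  simp only [pathQuery_pair, pathQuery_single, wl, wr]
  tauto

/-- Two databases with equal images under the `V_α` and the `V_i`, one purely unprimed and the
other purely primed, are copies of one database satisfying the constraints `u_i = v_i`; hence `Q`
agrees on them. -/
theorem query_iff_of_opposite {σ : Type} {n : ℕ} {u v : Fin n → NEWord σ} {u₀ v₀ : NEWord σ}
    (hE : ∀ E : GDB σ,
      (∀ i : Fin n, ∀ x y,
        pathQuery {(u i).toList} E x y ↔ pathQuery {(v i).toList} E x y) →
      ∀ x y, pathQuery {u₀.toList} E x y ↔ pathQuery {v₀.toList} E x y)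
    {D D' : GDB (σ ⊕ σ)}
    (hV : ∀ α x y, (D.edge (Sum.inl α) x y ∨ D.edge (Sum.inr α) x y) ↔
      (D'.edge (Sum.inl α) x y ∨ D'.edge (Sum.inr α) x y))
    (hW : ∀ i : Fin n, ∀ x y,
      pathQuery {wl (u i).toList, wr (v i).toList} D x y ↔
        pathQuery {wl (u i).toList, wr (v i).toList} D' x y)
    (hD : ∀ α x y, ¬ D.edge (Sum.inr α) x y) (hD' : ∀ α x y, ¬ D'.edge (Sum.inl α) x y)
    (x y : ℕ) :
    pathQuery {wl u₀.toList, wr v₀.toList} D x y ↔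
      pathQuery {wl u₀.toList, wr v₀.toList} D' x y := by
  have h' : ∀ α x y, D'.edge (Sum.inr α) x y ↔ (D.proj Sum.inl).edge α x y := by
    intro α x y
    have h₁ := hV α x y
    have h₂ := hD α x y
    have h₃ := hD' α x y
    simp only [GDB.proj]
    tauto
  have key := query_iff_of_copies (E := D.proj Sum.inl) hD hD' (fun _ _ _ => Iff.rfl) h'
  rw [(key u₀ v₀ x y).1, (key u₀ v₀ x y).2]
  refine hE _ (fun i x y => ?_) x y
  rw [← (key (u i) (v i) x y).1, ← (key (u i) (v i) x y).2]
  exact hW i x y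

/-- the view consisting of the path queries `V_α = {α, α'}`,
`V_i = {u_i, v_i'}`, and the queries `T_{α,β}`, `T'_{α,β}` determines the
path query `Q = {u, v'}` iff every finite graph database over `σ`
satisfying `u_i(E) = v_i(E)` for all `i` also satisfies `u(E) = v(E)`. -/
theorem stmt2 {σ : Type} [Fintype σ] (n : ℕ) (u v : Fin n → NEWord σ)
    (u₀ v₀ : NEWord σ) :
    (∀ D D' : GDB (σ ⊕ σ),
        (∀ α : σ, ∀ x y,
          pathQuery {[Sum.inl α], [Sum.inr α]} D x y ↔
            pathQuery {[Sum.inl α], [Sum.inr α]} D' x y) →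
        (∀ i : Fin n, ∀ x y,
          pathQuery {wl (u i).toList, wr (v i).toList} D x y ↔
            pathQuery {wl (u i).toList, wr (v i).toList} D' x y) →
        (∀ α β : σ, ∀ x y,
          (D.edge (Sum.inl α) x y ∧ ∃ z t, D.edge (Sum.inr β) z t) ↔
            (D'.edge (Sum.inl α) x y ∧ ∃ z t, D'.edge (Sum.inr β) z t)) →
        (∀ α β : σ, ∀ x y,
          (D.edge (Sum.inr α) x y ∧ ∃ z t, D.edge (Sum.inl β) z t) ↔
            (D'.edge (Sum.inr α) x y ∧ ∃ z t, D'.edge (Sum.inl β) z t)) →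
        ∀ x y, pathQuery {wl u₀.toList, wr v₀.toList} D x y ↔
          pathQuery {wl u₀.toList, wr v₀.toList} D' x y)
    ↔ (∀ E : GDB σ,
        (∀ i : Fin n, ∀ x y,
          pathQuery {(u i).toList} E x y ↔ pathQuery {(v i).toList} E x y) →
        ∀ x y, pathQuery {u₀.toList} E x y ↔ pathQuery {v₀.toList} E x y) := by
  constructor
  · intro hdet E hE x y
    have key := query_iff_of_copies (D := E.lift Sum.inl) (D' := E.lift Sum.inr) (E := E)
      (by simp [GDB.lift]) (by simp [GDB.lift]) (by simp [GDB.lift]) (by simp [GDB.lift])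
    rw [← (key u₀ v₀ x y).1, ← (key u₀ v₀ x y).2]
    apply hdet
    · intro α x y
      simp [pathQuery_pair, hasPath_letter, GDB.lift]
    · intro i x y
      rw [(key (u i) (v i) x y).1, (key (u i) (v i) x y).2]
      exact hE i x y
    · simp [GDB.lift]
    · simp [GDB.lift]
  · intro hE D D' hV hW hT hT' x y
    simp only [pathQuery_pair, hasPath_letter] at hV
    have same : (∀ c x y, D.edge c x y ↔ D'.edge c x y) →
        (pathQuery {wl u₀.toList, wr v₀.toList} D x y ↔
          pathQuery {wl u₀.toList, wr v₀.toList} D' x y) := by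
      intro h
      simp only [pathQuery_pair, wl, wr]
      exact or_congr (hasPath_map_iff (fun a => h (Sum.inl a)) u₀ x y)
        (hasPath_map_iff (fun a => h (Sum.inr a)) v₀ x y)
    by_cases hl : ∃ α x y, D.edge (Sum.inl α) x y
    · by_cases hr : ∃ α x y, D.edge (Sum.inr α) x y
      · exact same (edge_iff_of_mixed hT hT' hl hr)
      · by_cases hl' : ∃ α x y, D'.edge (Sum.inl α) x y
        · by_cases hr' : ∃ α x y, D'.edge (Sum.inr α) x y
          · exact same fun c x y => (edge_iff_of_mixed (fun α β x y => (hT α β x y).symm)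
              (fun α β x y => (hT' α β x y).symm) hl' hr' c x y).symm
          · push Not at hr hr'
            apply same
            rintro (a | a) x y
            · simpa [hr, hr'] using hV a x y
            · simp [hr, hr']
        · push Not at hr hl'
          exact query_iff_of_opposite hE hV hW hr hl' x y
    · by_cases hr' : ∃ α x y, D'.edge (Sum.inr α) x y
      · by_cases hl' : ∃ α x y, D'.edge (Sum.inl α) x y
        · exact same fun c x y => (edge_iff_of_mixed (fun α β x y => (hT α β x y).symm)
            (fun α β x y => (hT' α β x y).symm) hl' hr' c x y).symm
        · push Not at hl hl'
          apply same
          rintro (a | a) x y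
          · simp [hl, hl']
          · simpa [hl, hl'] using hV a x y
      · push Not at hl hr'
        exact (query_iff_of_opposite hE (fun α x y => (hV α x y).symm)
          (fun i x y => (hW i x y).symm) hr' hl x y).symm
end

section
/- Let V be an RPQ view from σ to τ (each V_t defined by a regular language over σ). Then there exists a constant c, depending only on V, such that for every finite graph database D over σ there exists a finite graph database D' over σ with V(D') = V(D) and with the number of nodes of D' at most c·s², where s is the number of nodes occurring in some tuple of some relation of V(D). -/
/-- A language is regular if it is recognized by a DFA with finitely many states. -/
def IsRegularLang {σ : Type} (L : Set (List σ)) : Prop :=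
  ∃ (Q : Type) (_ : Fintype Q) (M : DFA σ Q), ∀ w, w ∈ M.accepts ↔ w ∈ L

/-- The number of nodes occurring in some tuple of some relation of the view image `V(D)`. -/
noncomputable def activeCard {σ τ : Type} (V : τ → Set (List σ)) (D : GDB σ) : ℕ :=
  Set.ncard {x : ℕ | ∃ t y, pathQuery (V t) D x y ∨ pathQuery (V t) D y x}

namespace GDB.HasPath

variable {σ : Type} {D : GDB σ}

theorem left_mem {x y : ℕ} {w : List σ} (h : D.HasPath x w y) : x ∈ D.nodes := by
  cases h with
  | nil h => exact h
  | cons h _ => exact (D.edge_mem _ _ _ h).1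

theorem right_mem {x y : ℕ} {w : List σ} (h : D.HasPath x w y) : y ∈ D.nodes := by
  induction h with
  | nil h => exact h
  | cons _ _ ih => exact ih

theorem append {x y z : ℕ} {u v : List σ} (h : D.HasPath x u y) (h' : D.HasPath y v z) :
    D.HasPath x (u ++ v) z := by
  induction h with
  | nil _ => exact h'
  | cons e _ ih => exact .cons e (ih h')

theorem single {x y : ℕ} {a : σ} (h : D.edge a x y) : D.HasPath x [a] y :=
  .cons h (.nil (D.edge_mem _ _ _ h).2)

end GDB.HasPath

/-- Finitely many regular languages are recognized by a common morphism to a finite monoid. -/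
theorem exists_recognizing_monoid {σ τ : Type} [Fintype τ] (V : τ → Set (List σ))
    (hreg : ∀ t, IsRegularLang (V t)) :
    ∃ (M : Type) (_ : Monoid M) (_ : Fintype M) (κ : List σ → M) (Acc : τ → Set M),
      κ [] = 1 ∧ (∀ u v, κ (u ++ v) = κ u * κ v) ∧ ∀ t w, w ∈ V t ↔ κ w ∈ Acc t := by
  classical
  choose Q hQ N hN using hreg
  -- `evalFrom` composes words from left to right, so the order of composition is reversed.
  have : Finite (∀ t, Function.End (Q t)) := by
    have (t : τ) : Finite (Function.End (Q t)) := inferInstanceAs (Finite (Q t → Q t))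
    infer_instance
  have : Finite (∀ t, Function.End (Q t))ᵐᵒᵖ := .of_equiv _ MulOpposite.opEquiv
  refine ⟨(∀ t, Function.End (Q t))ᵐᵒᵖ, inferInstance, Fintype.ofFinite _,
    fun w => .op fun t q => (N t).evalFrom q w,
    fun t => {m | m.unop t (N t).start ∈ (N t).accept}, rfl, ?_, ?_⟩
  · intro u v
    apply MulOpposite.unop_injective
    funext t q
    exact (N t).evalFrom_of_append q u v
  · intro t w
    rw [← hN]
    rfl

/-- An abstract inactive node: a position on a path from `src` to `tgt`, remembered only through the
class `pre` of the word read so far, the class `suf` of the word still to be read, and a set `past`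
of classes of words that may lead to it. -/
structure Cell (M : Type) where
  src : ℕ
  tgt : ℕ
  pre : M
  suf : M
  past : Set M

namespace Cell

variable {σ M : Type}

theorem exists_injective [Finite M] : ∃ g : Cell M → ℕ, Function.Injective g := by
  have : Function.Injective
      (fun c : Cell M => (c.src, c.tgt, c.pre, c.suf, c.past)) := by
    rintro ⟨⟩ ⟨⟩ h
    simpa using h
  have := this.countable
  exact Countable.exists_injective_nat _

/-- The classes of all words labelling a path of `D` that ends in `z`. -/
def reach (κ : List σ → M) (D : GDB σ) (z : ℕ) : Set M :=
  {m | ∃ z' w, D.HasPath z' w z ∧ κ w = m}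

/-- The node `z` of `D`, lying outside `A`, has the cell `c` as one of its descriptions. -/
structure Realizes (κ : List σ → M) (D : GDB σ) (A : Finset ℕ) (c : Cell M) (z : ℕ) : Prop where
  src_mem : c.src ∈ A
  tgt_mem : c.tgt ∈ A
  not_mem : z ∉ A
  pre_path : ∃ w, D.HasPath c.src w z ∧ κ w = c.pre
  suf_path : ∃ w, D.HasPath z w c.tgt ∧ κ w = c.suf
  past_eq : c.past = reach κ D z

open Classical in
/-- The cells realized by some node of `D`. -/
noncomputable def cells [Fintype M] (κ : List σ → M) (D : GDB σ) (A : Finset ℕ) :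
    Finset (Cell M) :=
  ((A ×ˢ A ×ˢ (Finset.univ : Finset (M × M × Set M))).image
    fun p => ⟨p.1, p.2.1, p.2.2.1, p.2.2.2.1, p.2.2.2.2⟩).filter fun c => ∃ z, Realizes κ D A c z

theorem mem_cells [Fintype M] {κ : List σ → M} {D : GDB σ} {A : Finset ℕ} {c : Cell M} :
    c ∈ cells κ D A ↔ ∃ z, Realizes κ D A c z := by
  classical
  refine ⟨fun h => (Finset.mem_filter.1 h).2, fun h => Finset.mem_filter.2 ⟨?_, h⟩⟩
  obtain ⟨z, hz⟩ := h
  exact Finset.mem_image.2 ⟨(c.src, c.tgt, c.pre, c.suf, c.past),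
    by simp [hz.src_mem, hz.tgt_mem], rfl⟩

theorem card_cells_le [Fintype M] (κ : List σ → M) (D : GDB σ) (A : Finset ℕ) :
    (cells κ D A).card ≤ Nat.card (M × M × Set M) * A.card ^ 2 := by
  classical
  refine (Finset.card_filter_le _ _).trans (Finset.card_image_le.trans ?_)
  rw [Finset.card_product, Finset.card_product, Finset.card_univ, Nat.card_eq_fintype_card]
  apply le_of_eq
  ring

variable [Monoid M]

/-- The edges of the folded database, where the cell `c` is represented by the number `e c`. -/
inductive FoldEdge (κ : List σ → M) (D : GDB σ) (A : Finset ℕ) (e : Cell M → ℕ) :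
    σ → ℕ → ℕ → Prop
  | direct {a x y} : x ∈ A → y ∈ A → D.edge a x y → FoldEdge κ D A e a x y
  | enter {a c} : (∃ z, Realizes κ D A c z) → c.pre = κ [a] → FoldEdge κ D A e a c.src (e c)
  | inner {a c d} : (∃ z, Realizes κ D A c z) → (∃ z, Realizes κ D A d z) →
      d.src = c.src → d.tgt = c.tgt → d.pre = c.pre * κ [a] → c.suf = κ [a] * d.suf →
      (∀ m ∈ c.past, m * κ [a] ∈ d.past) → FoldEdge κ D A e a (e c) (e d)
  | leave {a c} : (∃ z, Realizes κ D A c z) → c.suf = κ [a] → FoldEdge κ D A e a (e c) c.tgt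

/-- The folded database: the nodes in `A` together with the realized cells. -/
noncomputable def fold [Fintype M] (κ : List σ → M) (D : GDB σ) (A : Finset ℕ)
    (e : Cell M → ℕ) : GDB σ where
  nodes := A ∪ (cells κ D A).image e
  edge := FoldEdge κ D A e
  edge_mem := by
    have key : ∀ c, (∃ z, Realizes κ D A c z) → e c ∈ A ∪ (cells κ D A).image e := fun c hc =>
      Finset.mem_union_right _ (Finset.mem_image_of_mem _ (mem_cells.2 hc))
    intro a x y h
    cases h with
    | direct hx hy _ => exact ⟨Finset.mem_union_left _ hx, Finset.mem_union_left _ hy⟩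
    | enter hc _ =>
      exact ⟨Finset.mem_union_left _ hc.choose_spec.src_mem, key _ hc⟩
    | inner hc hd => exact ⟨key _ hc, key _ hd⟩
    | leave hc _ => exact ⟨key _ hc, Finset.mem_union_left _ hc.choose_spec.tgt_mem⟩

/-- The node `z` of `D` represents the node `v` of the folded database. -/
def Rep (κ : List σ → M) (D : GDB σ) (A : Finset ℕ) (e : Cell M → ℕ) (v z : ℕ) : Prop :=
  (v ∈ A ∧ z = v) ∨ ∃ c, v = e c ∧ Realizes κ D A c z

/-- Some path of `D` from `x` to a representative of `v` has class `m`. -/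
def Traces (κ : List σ → M) (D : GDB σ) (A : Finset ℕ) (e : Cell M → ℕ) (x : ℕ) (m : M)
    (v : ℕ) : Prop :=
  ∃ z, Rep κ D A e v z ∧ ∃ w, D.HasPath x w z ∧ κ w = m

theorem Traces.prepend {κ : List σ → M} {D : GDB σ} {A : Finset ℕ} {e : Cell M → ℕ}
    (hmul : ∀ u v, κ (u ++ v) = κ u * κ v) {x y v : ℕ} {m : M} {w : List σ}
    (h : D.HasPath x w y) (ht : Traces κ D A e y m v) : Traces κ D A e x (κ w * m) v := by
  obtain ⟨z, hz, w', hw', rfl⟩ := ht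
  exact ⟨z, hz, w ++ w', h.append hw', hmul _ _⟩

theorem mem_fold_nodes [Fintype M] {κ : List σ → M} {D : GDB σ} {A : Finset ℕ} {e : Cell M → ℕ}
    {u : ℕ} : u ∈ (fold κ D A e).nodes ↔ u ∈ A ∨ ∃ c, (∃ z, Realizes κ D A c z) ∧ u = e c := by
  simp only [fold, Finset.mem_union, Finset.mem_image, mem_cells, eq_comm (a := u)]

/-- What a path of the folded database says about `D`. From an active node, its class is that of
a path of `D`. From a cell, either it leaves through the target of the cell, or it stays among the
cells between the same two active nodes. -/
theorem path_sound [Fintype M] {κ : List σ → M} {D : GDB σ} {A : Finset ℕ} {e : Cell M → ℕ}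
    (hone : κ [] = 1) (hmul : ∀ u v, κ (u ++ v) = κ u * κ v) (hA : A ⊆ D.nodes)
    (he : Function.Injective e) (heA : ∀ c, e c ∉ A) {u v : ℕ} {w : List σ}
    (h : (fold κ D A e).HasPath u w v) :
    (u ∈ A → Traces κ D A e u (κ w) v) ∧
    ∀ c, u = e c →
      (∃ m, κ w = c.suf * m ∧ Traces κ D A e c.tgt m v) ∨
      ∃ d z, v = e d ∧ Realizes κ D A d z ∧ d.src = c.src ∧ d.pre = c.pre * κ w ∧
        ∀ s ∈ c.past, s * κ w ∈ d.past := by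
  induction h with
  | @nil x hx =>
    refine ⟨fun hxA => ⟨x, .inl ⟨hxA, rfl⟩, [], .nil (hA hxA), rfl⟩, ?_⟩
    rintro c rfl
    obtain h | ⟨d, ⟨z, hz⟩, hd⟩ := mem_fold_nodes.1 hx
    · exact absurd h (heA c)
    · obtain rfl := he hd
      exact .inr ⟨c, z, rfl, hz, rfl, by simp [hone], by simp [hone]⟩
  | @cons x y v a w hxy _ ih =>
    have hcons : κ (a :: w) = κ [a] * κ w := hmul [a] w
    change FoldEdge κ D A e a x y at hxy
    cases hxy with
    | direct hx hy hD =>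
      refine ⟨fun _ => ?_, ?_⟩
      · rw [hcons]
        exact (ih.1 hy).prepend hmul (.single hD)
      · rintro c rfl
        exact absurd hx (heA c)
    | @enter c hc hpre =>
      refine ⟨fun _ => ?_, ?_⟩
      · rw [hcons]
        obtain ⟨m, hm, ht⟩ | ⟨d, z, rfl, hz, hsrc, hdpre, -⟩ := ih.2 c rfl
        · obtain ⟨z, hz⟩ := hc
          obtain ⟨w₁, hw₁, hk₁⟩ := hz.pre_path
          obtain ⟨w₂, hw₂, hk₂⟩ := hz.suf_path
          have := (ht.prepend hmul hw₂).prepend hmul hw₁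
          rwa [hk₁, hk₂, hpre, ← hm] at this
        · obtain ⟨w₁, hw₁, hk₁⟩ := hz.pre_path
          rw [hsrc] at hw₁
          exact ⟨z, .inr ⟨d, rfl, hz⟩, w₁, hw₁, by rw [hk₁, hdpre, hpre]⟩
      · intro d hd
        exact absurd (hd ▸ hc.choose_spec.src_mem) (heA d)
    | @inner c d hc hd hsrc htgt hpre hsuf hpast =>
      refine ⟨fun h => absurd h (heA c), ?_⟩
      intro c' hc'
      obtain rfl := he hc'
      obtain ⟨m, hm, ht⟩ | ⟨f, z, rfl, hz, hfsrc, hfpre, hfpast⟩ := ih.2 d rfl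
      · exact .inl ⟨m, by rw [hcons, hm, hsuf, mul_assoc], htgt ▸ ht⟩
      · refine .inr ⟨f, z, rfl, hz, hfsrc.trans hsrc, by rw [hfpre, hpre, hcons, mul_assoc], ?_⟩
        intro s hs
        rw [hcons, ← mul_assoc]
        exact hfpast _ (hpast s hs)
    | @leave c hc hsuf =>
      refine ⟨fun h => absurd h (heA c), ?_⟩
      intro c' hc'
      obtain rfl := he hc'
      exact .inl ⟨κ w, by rw [hcons, hsuf], ih.1 hc.choose_spec.tgt_mem⟩

/-- Paths of `D` ending in `A` lift to the folded database. From a node `u` outside `A`, the path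
starts in a cell whose target is the first active node after `u`. -/
theorem lift_path [Fintype M] {κ : List σ → M} {D : GDB σ} {A : Finset ℕ} {e : Cell M → ℕ}
    (hmul : ∀ u v, κ (u ++ v) = κ u * κ v) {u y : ℕ} {w : List σ}
    (h : D.HasPath u w y) (hy : y ∈ A) :
    (u ∈ A → (fold κ D A e).HasPath u w y) ∧
    (u ∉ A → ∃ y' ∈ A, ∃ w₁, D.HasPath u w₁ y' ∧ ∀ x ∈ A, ∀ w₀, D.HasPath x w₀ u →
      (fold κ D A e).HasPath (e ⟨x, y', κ w₀, κ w₁, reach κ D u⟩) w y) := by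
  induction h with
  | nil _ => exact ⟨fun h => .nil (mem_fold_nodes.2 (.inl h)), fun h => absurd hy h⟩
  | @cons u u' y a w hD _ ih =>
    have ih := ih hy
    have hreal : u ∉ A → ∀ x ∈ A, ∀ y' ∈ A, ∀ w₀ w₁, D.HasPath x w₀ u → D.HasPath u w₁ y' →
        Realizes κ D A ⟨x, y', κ w₀, κ w₁, reach κ D u⟩ u := fun hu x hx y' hy' w₀ w₁ h₀ h₁ =>
      ⟨hx, hy', hu, ⟨w₀, h₀, rfl⟩, ⟨w₁, h₁, rfl⟩, rfl⟩
    by_cases hu' : u' ∈ A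
    · refine ⟨fun hu => .cons (FoldEdge.direct hu hu' hD) (ih.1 hu'), fun hu => ?_⟩
      refine ⟨u', hu', [a], .single hD, fun x hx w₀ hw₀ => ?_⟩
      exact .cons (FoldEdge.leave (c := ⟨x, u', κ w₀, κ [a], reach κ D u⟩)
        ⟨u, hreal hu x hx u' hu' _ _ hw₀ (.single hD)⟩ rfl) (ih.1 hu')
    · obtain ⟨y', hy', w₁, hw₁, H⟩ := ih.2 hu'
      have hreal' : ∀ x ∈ A, ∀ w₀, D.HasPath x w₀ u' →
          Realizes κ D A ⟨x, y', κ w₀, κ w₁, reach κ D u'⟩ u' := fun x hx w₀ h₀ =>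
        ⟨hx, hy', hu', ⟨w₀, h₀, rfl⟩, ⟨w₁, hw₁, rfl⟩, rfl⟩
      refine ⟨fun hu => ?_, fun hu => ?_⟩
      · exact .cons (FoldEdge.enter (c := ⟨u, y', κ [a], κ w₁, reach κ D u'⟩)
          ⟨u', hreal' u hu [a] (.single hD)⟩ rfl) (H u hu [a] (.single hD))
      · refine ⟨y', hy', a :: w₁, .cons hD hw₁, fun x hx w₀ hw₀ => ?_⟩
        have hw₀' := hw₀.append (.single hD)
        refine .cons (FoldEdge.inner ⟨u, hreal hu x hx y' hy' _ _ hw₀ (.cons hD hw₁)⟩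
          ⟨u', hreal' x hx _ hw₀'⟩ rfl rfl (hmul _ _) (hmul [a] w₁) ?_) (H x hx _ hw₀')
        rintro m ⟨z', w', hw', rfl⟩
        exact ⟨z', w' ++ [a], hw'.append (.single hD), hmul _ _⟩

end Cell

/-- for an RPQ view `V` there is a constant `c` (depending only on `V`)
such that every view image is also the view image of a database with at most
`c·s²` nodes, where `s` is the number of nodes occurring in tuples of the view image. -/
theorem stmt3 {σ τ : Type} [Fintype σ] [Fintype τ] (V : τ → Set (List σ))
    (hreg : ∀ t, IsRegularLang (V t)) :
    ∃ c : ℕ, ∀ D : GDB σ, ∃ D' : GDB σ,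
      (∀ t x y, pathQuery (V t) D' x y ↔ pathQuery (V t) D x y) ∧
      D'.nodes.card ≤ c * (activeCard V D) ^ 2 := by
  obtain ⟨M, _, _, κ, Acc, hone, hmul, hV⟩ := exists_recognizing_monoid V hreg
  refine ⟨1 + Nat.card (M × M × Set M), fun D => ?_⟩
  have hsub : {x : ℕ | ∃ t y, pathQuery (V t) D x y ∨ pathQuery (V t) D y x} ⊆ D.nodes := by
    rintro x ⟨t, y, ⟨w, -, h⟩ | ⟨w, -, h⟩⟩
    · exact h.left_mem
    · exact h.right_mem
  have hfin := D.nodes.finite_toSet.subset hsub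
  obtain ⟨A, hAset⟩ := hfin.exists_finset
  replace hAset : ∀ x, x ∈ A ↔ ∃ t y, pathQuery (V t) D x y ∨ pathQuery (V t) D y x := hAset
  have hcard : activeCard V D = A.card := by
    rw [activeCard, ← Set.ncard_coe_finset]
    congr 1
    ext x
    exact (hAset x).symm
  have hAD : A ⊆ D.nodes := fun x hx => hsub ((hAset x).1 hx)
  have hacc : ∀ {t x y w m}, m ∈ Acc t → D.HasPath x w y → κ w = m →
      pathQuery (V t) D x y ∧ x ∈ A ∧ y ∈ A := by
    intro t x y w m hm hw hk
    have h : pathQuery (V t) D x y := ⟨w, (hV t w).2 (hk ▸ hm), hw⟩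
    exact ⟨h, (hAset x).2 ⟨t, y, .inl h⟩, (hAset y).2 ⟨t, x, .inr h⟩⟩
  obtain ⟨g, hg⟩ := Cell.exists_injective (M := M)
  -- Shifting past the largest active node keeps the codes of cells apart from `A`.
  let e : Cell M → ℕ := fun c => A.sup id + 1 + g c
  have he : Function.Injective e := fun c d h => hg (Nat.add_left_cancel h)
  have heA : ∀ c, e c ∉ A := by
    intro c hc
    have : e c ≤ A.sup id := Finset.le_sup (f := id) hc
    simp only [e] at this
    omega
  refine ⟨Cell.fold κ D A e, fun t x y => ⟨?_, ?_⟩, ?_⟩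
  · rintro ⟨w, hwV, hw⟩
    have hm := (hV t w).1 hwV
    have hs := Cell.path_sound hone hmul hAD he heA hw
    obtain hx | ⟨c, ⟨z₀, hz₀⟩, rfl⟩ := Cell.mem_fold_nodes.1 hw.left_mem
    · obtain ⟨z, hz, w', hw', hk⟩ := hs.1 hx
      obtain ⟨hq, -, hzA⟩ := hacc hm hw' hk
      obtain ⟨-, rfl⟩ | ⟨c, -, hc⟩ := hz
      · exact hq
      · exact absurd hzA hc.not_mem
    · exfalso
      obtain ⟨m, hm', ht⟩ | ⟨d, z, -, hz, -, -, hpast⟩ := hs.2 c rfl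
      · obtain ⟨w₂, hw₂, hk₂⟩ := hz₀.suf_path
        obtain ⟨z, -, w', hw', hk⟩ := ht.prepend hmul hw₂
        rw [hk₂, ← hm'] at hk
        exact hz₀.not_mem (hacc hm hw' hk).2.1
      · obtain ⟨w₂, hw₂, -⟩ := hz₀.suf_path
        have h1 : (1 : M) ∈ c.past := by
          rw [hz₀.past_eq]
          exact ⟨z₀, [], .nil hw₂.left_mem, hone⟩
        have h2 := hpast 1 h1
        rw [one_mul, hz.past_eq] at h2
        obtain ⟨z', w', hw', hk⟩ := h2
        exact hz.not_mem (hacc hm hw' hk).2.2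
  · rintro ⟨w, hwV, hw⟩
    obtain ⟨-, hx, hy⟩ := hacc ((hV t w).1 hwV) hw rfl
    exact ⟨w, hwV, (Cell.lift_path hmul hw hy).1 hx⟩
  · rw [hcard]
    calc (Cell.fold κ D A e).nodes.card
        ≤ A.card + ((Cell.cells κ D A).image e).card := Finset.card_union_le _ _
      _ ≤ A.card + (Cell.cells κ D A).card := by gcongr; exact Finset.card_image_le
      _ ≤ A.card ^ 2 + Nat.card (M × M × Set M) * A.card ^ 2 :=
        add_le_add (Nat.le_self_pow two_ne_zero _) (Cell.card_cells_le κ D A)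
      _ = _ := by ring
end

section
/- Let σ be a finite alphabet, let $ be a symbol not in σ, and let L ⊆ σ* be any language. Over the alphabet σ ∪ {$}, let V = {V₁, V₂} be the view where V₁ is the path query of the language $·L·$ and V₂ is the path query of the language $·σ*·$. Then the following are equivalent: (a) there exist a finite graph database D over σ ∪ {$} and two nodes x, y of D such that V₂(D) = {(x,y)} and V₁(D) = ∅; (b) L ≠ σ* (L is not universal over σ). -/
/-- The simple path labelled `m`: nodes `0, …, |m|`, and an edge from `i` to `i + 1` carrying the
`i`-th letter of `m` (counted from `0`). -/
def wordDB {α : Type} (m : List α) : GDB α where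
  nodes := Finset.range (m.length + 1)
  edge a x y := y = x + 1 ∧ m[x]? = some a
  edge_mem := by
    rintro a x y ⟨rfl, h⟩
    obtain ⟨hx, -⟩ := List.getElem?_eq_some_iff.1 h
    simp only [Finset.mem_range]
    omega

/-- The paths of `wordDB m` starting at `p` are the prefixes of the suffix of `m` at `p`. -/
theorem wordDB_hasPath_iff {α : Type} (m w : List α) (p q : ℕ) :
    (wordDB m).HasPath p w q ↔ p ≤ m.length ∧ w <+: m.drop p ∧ q = p + w.length := by
  constructor
  · intro h
    induction h with
    | nil hx =>
      simp only [wordDB, Finset.mem_range] at hx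
      exact ⟨by omega, List.nil_prefix, rfl⟩
    | cons he _ ih =>
      obtain ⟨rfl, he⟩ := he
      obtain ⟨hx, rfl⟩ := List.getElem?_eq_some_iff.1 he
      obtain ⟨-, h2, h3⟩ := ih
      refine ⟨hx.le, ?_, by simp only [List.length_cons]; omega⟩
      rw [List.drop_eq_getElem_cons hx]
      exact List.cons_prefix_cons.2 ⟨rfl, h2⟩
  · induction w generalizing p with
    | nil =>
      rintro ⟨h1, -, rfl⟩
      exact .nil (by simp only [wordDB, Finset.mem_range]; omega)
    | cons a w ih =>
      rintro ⟨h1, h2, rfl⟩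
      have hp : p < m.length := by
        have := h2.length_le
        simp only [List.length_cons, List.length_drop] at this
        omega
      rw [List.drop_eq_getElem_cons hp, List.cons_prefix_cons] at h2
      exact .cons (y := p + 1) ⟨rfl, List.getElem?_eq_some_iff.2 ⟨hp, h2.1.symm⟩⟩
        (ih _ ⟨hp, h2.2, by simp only [List.length_cons]; omega⟩)

theorem eq_of_map_some_prefix {σ : Type} (v u : List σ)
    (h : v.map some ++ [none] <+: u.map some ++ [none]) : v = u := by
  induction v generalizing u with
  | nil => cases u <;> simp_all
  | cons a v ih =>
    cases u with
    | nil => simp at h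
    | cons b u =>
      simp only [List.map_cons, List.cons_append, List.cons_prefix_cons, Option.some.injEq] at h
      rw [h.1, ih u h.2]

/-- The only factor of `$u$` of the form `$v$` is `$u$` itself, at position `0`. -/
theorem eq_of_dollar_prefix_drop {σ : Type} (v u : List σ) (p : ℕ)
    (h : none :: v.map some ++ [none] <+: (none :: u.map some ++ [none]).drop p) :
    p = 0 ∧ v = u := by
  cases p with
  | zero =>
    refine ⟨rfl, eq_of_map_some_prefix v u ?_⟩
    simpa only [List.drop_zero, List.cons_append, List.cons_prefix_cons, true_and] using h
  | succ k =>
    exfalso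
    have hlen := h.length_le
    simp only [List.cons_append, List.drop_succ_cons, List.length_cons, List.length_append,
      List.length_drop, List.length_map, List.length_nil] at hlen
    have hk : k < u.length := by omega
    rw [List.cons_append, List.cons_append, List.drop_succ_cons,
      List.drop_append_of_le_length (by simpa using hk.le),
      List.drop_eq_getElem_cons (by simpa using hk), List.cons_append,
      List.cons_prefix_cons] at h
    simp at h

/-- there is a graph database `D` and nodes `x, y` with
`V₂(D) = {(x,y)}` (where `L(V₂) = $·σ*·$`) and `V₁(D) = ∅`
(where `L(V₁) = $·L·$`) iff `L` is not universal over `σ`. -/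
theorem stmt5 {σ : Type} [Fintype σ] (L : Set (List σ)) :
    (∃ (D : GDB (Option σ)) (x y : ℕ), x ∈ D.nodes ∧ y ∈ D.nodes ∧
        (∀ p q, pathQuery (dollarLang (Set.univ : Set (List σ))) D p q ↔ (p = x ∧ q = y)) ∧
        (∀ p q, ¬ pathQuery (dollarLang L) D p q))
    ↔ L ≠ Set.univ := by
  constructor
  · rintro ⟨D, x, y, -, -, h2, h1⟩ rfl
    exact h1 x y ((h2 x y).2 ⟨rfl, rfl⟩)
  · intro hL
    obtain ⟨u, hu⟩ := (Set.ne_univ_iff_exists_notMem L).1 hL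
    refine ⟨wordDB (none :: u.map some ++ [none]), 0, u.length + 2, ?_, ?_, ?_, ?_⟩
    · simp [wordDB]
    · simp [wordDB]
    · intro p q
      constructor
      · rintro ⟨w, ⟨v, -, rfl⟩, hw⟩
        obtain ⟨-, hpre, rfl⟩ := (wordDB_hasPath_iff _ _ _ _).1 hw
        obtain ⟨rfl, rfl⟩ := eq_of_dollar_prefix_drop v u p hpre
        simp
      · rintro ⟨rfl, rfl⟩
        exact ⟨_, ⟨u, Set.mem_univ u, rfl⟩,
          (wordDB_hasPath_iff _ _ _ _).2 ⟨Nat.zero_le _, List.prefix_rfl, by simp⟩⟩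
    · rintro p q ⟨w, ⟨v, hv, rfl⟩, hw⟩
      obtain ⟨-, hpre, -⟩ := (wordDB_hasPath_iff _ _ _ _).1 hw
      exact hu ((eq_of_dollar_prefix_drop v u p hpre).2 ▸ hv)
end

section
/- Let V be an RPQ view from σ to τ and Q an RPQ query over σ such that V determines Q in a monotone way. Let P be a query mapping each τ-structure to a binary relation on its nodes, such that: (1) P is closed under homomorphisms, i.e., for all τ-structures S, S', every homomorphism h : S → S', and all nodes u, v of S, if (u,v) ∈ P(S) then (h(u), h(v)) ∈ P(S'); (2) P is sound and complete on simple paths, i.e., for every graph database D consisting of a single simple path from u to v such that u and v occur in some tuple of V(D), one has (u,v) ∈ P(V(D)) if and only if (u,v) ∈ Q(D); (3) P is always sound, i.e., for every finite graph database D over σ and all nodes u, v of D, if (u,v) ∈ P(V(D)) then (u,v) ∈ Q(D). Then P is a rewriting of Q using V: for every finite graph database D over σ, P(V(D)) = Q(D). -/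
/-- A `τ`-structure: a finite set of nodes with a binary relation for each `t ∈ τ`. -/
structure TStruct (τ : Type) where
  nodes : Finset ℕ
  rel : τ → ℕ → ℕ → Prop

/-- `h` is a homomorphism from the `τ`-structure `S` to the `τ`-structure `S'`. -/
def IsHom {τ : Type} (h : ℕ → ℕ) (S S' : TStruct τ) : Prop :=
  (∀ x ∈ S.nodes, h x ∈ S'.nodes) ∧ ∀ t x y, S.rel t x y → S'.rel t (h x) (h y)

/-- The view image `V(D)` as a `τ`-structure (on the same node set as `D`). -/
def viewStruct {σ τ : Type} (V : τ → Set (List σ)) (D : GDB σ) : TStruct τ :=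
  ⟨D.nodes, fun t => pathQuery (V t) D⟩

/-- `D` consists of a single simple path from `u` to `v`. -/
def IsSimplePathDB {σ : Type} (D : GDB σ) (u v : ℕ) : Prop :=
  ∃ (m : ℕ) (x : Fin (m + 1) → ℕ) (a : Fin m → σ),
    Function.Injective x ∧ u = x 0 ∧ v = x (Fin.last m) ∧
    (D.nodes : Set ℕ) = Set.range x ∧
    (∀ (b : σ) (p q : ℕ),
      D.edge b p q ↔ ∃ i : Fin m, b = a i ∧ p = x i.castSucc ∧ q = x i.succ)

theorem GDB.HasPath.left_mem_s11 {σ : Type} {D : GDB σ} {x y : ℕ} {w : List σ}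
    (h : D.HasPath x w y) : x ∈ D.nodes := by
  cases h with
  | nil h => exact h
  | cons h _ => exact (D.edge_mem _ _ _ h).1

theorem GDB.HasPath.right_mem_s11 {σ : Type} {D : GDB σ} {x y : ℕ} {w : List σ}
    (h : D.HasPath x w y) : y ∈ D.nodes := by
  induction h with
  | nil h => exact h
  | cons _ _ ih => exact ih

theorem GDB.HasPath.hom {σ : Type} {D E : GDB σ} (f : ℕ → ℕ)
    (hn : ∀ x ∈ D.nodes, f x ∈ E.nodes)
    (he : ∀ a x y, D.edge a x y → E.edge a (f x) (f y))
    {x y : ℕ} {w : List σ} (h : D.HasPath x w y) : E.HasPath (f x) w (f y) := by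
  induction h with
  | nil h => exact .nil (hn _ h)
  | cons h _ ih => exact .cons (he _ _ _ h) ih

theorem viewStruct_isHom {σ τ : Type} (V : τ → Set (List σ)) {D E : GDB σ} (f : ℕ → ℕ)
    (hn : ∀ x ∈ D.nodes, f x ∈ E.nodes)
    (he : ∀ a x y, D.edge a x y → E.edge a (f x) (f y)) :
    IsHom f (viewStruct V D) (viewStruct V E) :=
  ⟨hn, fun _ _ _ ⟨w, hw, h⟩ => ⟨w, hw, h.hom f hn he⟩⟩

/-- The image of a graph database under a map of nodes. -/
def GDB.map {σ : Type} (f : ℕ → ℕ) (D : GDB σ) : GDB σ where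
  nodes := D.nodes.image f
  edge a x y := ∃ p q, D.edge a p q ∧ f p = x ∧ f q = y
  edge_mem := by
    rintro a _ _ ⟨p, q, h, rfl, rfl⟩
    have := D.edge_mem _ _ _ h
    exact ⟨Finset.mem_image_of_mem f this.1, Finset.mem_image_of_mem f this.2⟩

/-- Under monotone determinacy, every node in an answer to `Q` occurs in the view image. -/
theorem occurs_of_pathQuery {σ τ : Type} (V : τ → Set (List σ)) (Q : Set (List σ))
    (hdet : ∀ D D' : GDB σ,
        (∀ t x y, pathQuery (V t) D x y → pathQuery (V t) D' x y) →
        ∀ x y, pathQuery Q D x y → pathQuery Q D' x y)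
    (E : GDB σ) {x y z : ℕ} (hq : pathQuery Q E x y) (hz : z = x ∨ z = y) :
    ∃ t w, pathQuery (V t) E z w ∨ pathQuery (V t) E w z := by
  by_contra hno
  push Not at hno
  obtain ⟨c, hc⟩ := Infinite.exists_notMem_finset (insert z E.nodes)
  rw [Finset.mem_insert, not_or] at hc
  set f : ℕ → ℕ := fun i => if i = z then c else i with hf
  have hview : ∀ t p q, pathQuery (V t) E p q → pathQuery (V t) (E.map f) p q := by
    rintro t p q ⟨w, hw, h⟩
    have hp : f p = p := if_neg fun e : p = z => (hno t q).1 (e ▸ ⟨w, hw, h⟩)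
    have hq : f q = q := if_neg fun e : q = z => (hno t p).2 (e ▸ ⟨w, hw, h⟩)
    have := h.hom (E := E.map f) f (fun i hi => Finset.mem_image_of_mem f hi)
      (fun a i j hij => ⟨i, j, hij, rfl, rfl⟩)
    rw [hp, hq] at this
    exact ⟨w, hw, this⟩
  obtain ⟨w, -, h⟩ := hdet _ _ hview x y hq
  have hmem : z ∈ (E.map f).nodes := by
    rcases hz with rfl | rfl
    exacts [h.left_mem_s11, h.right_mem_s11]
  obtain ⟨i, -, hi⟩ := Finset.mem_image.1 hmem
  simp only [hf] at hi
  split_ifs at hi with e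
  exacts [hc.1 hi, e hi]

/-- The simple path with label `w`, on the nodes `0, …, w.length`. -/
def lineDB {σ : Type} (w : List σ) : GDB σ where
  nodes := Finset.range (w.length + 1)
  edge a p q := ∃ h : p < w.length, a = w[p] ∧ q = p + 1
  edge_mem := by
    rintro a p q ⟨h, -, rfl⟩
    simp only [Finset.mem_range]
    omega

theorem lineDB_isSimplePathDB {σ : Type} (w : List σ) :
    IsSimplePathDB (lineDB w) 0 w.length := by
  refine ⟨w.length, fun i => i, fun i => w[i], Fin.val_injective, rfl, rfl, ?_, ?_⟩
  · ext i
    simp only [lineDB, Finset.coe_range, Set.mem_Iio, Set.mem_range]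
    exact ⟨fun h => ⟨⟨i, h⟩, rfl⟩, fun ⟨j, hj⟩ => hj ▸ j.2⟩
  · intro b p q
    constructor
    · rintro ⟨h, hb, hq⟩
      exact ⟨⟨p, h⟩, hb, rfl, hq⟩
    · rintro ⟨i, hb, rfl, rfl⟩
      exact ⟨i.2, hb, rfl⟩

theorem lineDB_hasPath {σ : Type} (w : List σ) : (lineDB w).HasPath 0 w w.length := by
  have key : ∀ i ≤ w.length, (lineDB w).HasPath i (w.drop i) w.length := by
    intro i hi
    induction hi using Nat.decreasingInduction with
    | self =>
      rw [List.drop_length]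
      exact .nil (Finset.mem_range.2 (Nat.lt_succ_self _))
    | of_succ k hk ih =>
      rw [List.drop_eq_getElem_cons hk]
      exact .cons ⟨hk, rfl, rfl⟩ ih
  simpa using key 0 (Nat.zero_le _)

/-- A path labelled `w` is a homomorphic image of `lineDB w`. -/
theorem GDB.HasPath.exists_hom {σ : Type} {D : GDB σ} {u v : ℕ} {w : List σ}
    (h : D.HasPath u w v) :
    ∃ f : ℕ → ℕ, f 0 = u ∧ f w.length = v ∧ (∀ x ∈ (lineDB w).nodes, f x ∈ D.nodes) ∧
      ∀ a x y, (lineDB w).edge a x y → D.edge a (f x) (f y) := by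
  induction h with
  | @nil x hx =>
    refine ⟨fun _ => x, rfl, rfl, fun _ _ => hx, ?_⟩
    rintro a p q ⟨hp, -⟩
    exact absurd hp (Nat.not_lt_zero _)
  | @cons x y z a w hxy _ ih =>
    obtain ⟨f, h0, hl, hn, he⟩ := ih
    refine ⟨fun i => Nat.casesOn i x f, rfl, hl, ?_, ?_⟩
    · rintro (_ | i) hi
      · exact (D.edge_mem _ _ _ hxy).1
      · refine hn i ?_
        simp only [lineDB, Finset.mem_range, List.length_cons] at hi ⊢
        omega
    · rintro b (_ | p) q ⟨hp, rfl, rfl⟩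
      · simpa [h0] using hxy
      · exact he _ p (p + 1) ⟨Nat.lt_of_succ_lt_succ hp, rfl, rfl⟩

/-- if `V` determines `Q` in a monotone way and `P` is closed under
homomorphisms, sound and complete on simple paths, and always sound, then `P` is a
rewriting of `Q` using `V`. -/
theorem stmt11 {σ τ : Type} [Fintype σ] [Fintype τ]
    (V : τ → Set (List σ)) (Q : Set (List σ))
    (hV : ∀ t, IsRegularLang (V t)) (hQ : IsRegularLang Q)
    (hdet : ∀ D D' : GDB σ,
        (∀ t x y, pathQuery (V t) D x y → pathQuery (V t) D' x y) →
        ∀ x y, pathQuery Q D x y → pathQuery Q D' x y)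
    (P : TStruct τ → ℕ → ℕ → Prop)
    (hhom : ∀ (S S' : TStruct τ) (h : ℕ → ℕ), IsHom h S S' →
        ∀ u v, P S u v → P S' (h u) (h v))
    (hpath : ∀ (D : GDB σ) (u v : ℕ), IsSimplePathDB D u v →
        (∃ t w, pathQuery (V t) D u w ∨ pathQuery (V t) D w u) →
        (∃ t w, pathQuery (V t) D v w ∨ pathQuery (V t) D w v) →
        (P (viewStruct V D) u v ↔ pathQuery Q D u v))
    (hsound : ∀ (D : GDB σ) (u v : ℕ), u ∈ D.nodes → v ∈ D.nodes →
        P (viewStruct V D) u v → pathQuery Q D u v) :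
    ∀ (D : GDB σ) (u v : ℕ), u ∈ D.nodes → v ∈ D.nodes →
      (P (viewStruct V D) u v ↔ pathQuery Q D u v) := by
  intro D u v hu hv
  refine ⟨hsound D u v hu hv, ?_⟩
  rintro ⟨w, hw, h⟩
  obtain ⟨f, rfl, rfl, hn, he⟩ := h.exists_hom
  have hq : pathQuery Q (lineDB w) 0 w.length := ⟨w, hw, lineDB_hasPath w⟩
  have hP := (hpath _ _ _ (lineDB_isSimplePathDB w)
    (occurs_of_pathQuery V Q hdet _ hq (.inl rfl))
    (occurs_of_pathQuery V Q hdet _ hq (.inr rfl))).2 hq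
  exact hhom _ _ f (viewStruct_isHom V f hn he) _ _ hP
end

section
/- Let A be a complete deterministic finite automaton over σ with finite state set S_V, initial state q⁰, and transition function δ extended to words. Let V = (V_t)_{t∈τ} be an RPQ view such that for each t ∈ τ there is a set F_t ⊆ S_V with L(V_t) = {w ∈ σ* : δ(q⁰, w) ∈ F_t}. Let D be the graph database consisting of a single simple path x₀ a₁ x₁ a₂ ⋯ a_m x_m. For k ≤ m, define the relation ∼_k on {x₀, …, x_k} by: x_i ∼_k x_j if and only if for every t ∈ τ and every r with k ≤ r ≤ m, (x_i, x_r) ∈ V_t(D) ⟺ (x_j, x_r) ∈ V_t(D). Then ∼_k is an equivalence relation on {x₀, …, x_k} with at most |S_V| equivalence classes. -/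
/-- On a database that is a single simple path, there is exactly one path from `x i` to `x r`
when `i ≤ r`, labelled by the letters `a_{i+1} ⋯ a_r`, and none when `r < i`. -/
theorem hasPath_iff {σ : Type} {m : ℕ} {x : Fin (m + 1) → ℕ} {a : Fin m → σ}
    (hinj : Function.Injective x) {D : GDB σ}
    (hnodes : (D.nodes : Set ℕ) = Set.range x)
    (hedge : ∀ (b : σ) (p q : ℕ),
        D.edge b p q ↔ ∃ i : Fin m, b = a i ∧ p = x i.castSucc ∧ q = x i.succ)
    (i r : Fin (m + 1)) (w : List σ) :
    D.HasPath (x i) w (x r) ↔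
      (i : ℕ) ≤ r ∧ w = ((List.ofFn a).take r).drop i := by
  constructor
  · intro h
    generalize hp : x i = p at h
    generalize hq : x r = q at h
    induction h generalizing i with
    | nil _ =>
      obtain rfl : i = r := hinj (hp.trans hq.symm)
      simp
    | cons he _ ih =>
      obtain ⟨j, rfl, hj, hy⟩ := (hedge _ _ _).1 he
      obtain rfl : i = j.castSucc := hinj (hp.trans hj)
      obtain ⟨hle, rfl⟩ := ih j.succ hy.symm hq
      rw [Fin.val_succ] at hle
      have hjm := j.isLt
      refine ⟨by simp only [Fin.val_castSucc]; omega, ?_⟩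
      rw [Fin.val_castSucc, Fin.val_succ, List.drop_eq_getElem_cons (i := (j : ℕ))
        (by simp only [List.length_take, List.length_ofFn]; omega)]
      simp
  · rintro ⟨hle, rfl⟩
    obtain ⟨d, hd⟩ := Nat.exists_eq_add_of_le hle
    induction d generalizing i with
    | zero =>
      obtain rfl : r = i := Fin.ext hd
      have hmem : x r ∈ (D.nodes : Set ℕ) := hnodes ▸ Set.mem_range_self r
      simpa using GDB.HasPath.nil (D := D) hmem
    | succ d ih =>
      have hr := r.isLt
      obtain ⟨j, rfl⟩ : ∃ j : Fin m, i = j.castSucc := ⟨⟨i, by omega⟩, rfl⟩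
      rw [Fin.val_castSucc] at hd
      rw [Fin.val_castSucc, List.drop_eq_getElem_cons (i := (j : ℕ))
        (by simp only [List.length_take, List.length_ofFn]; omega)]
      refine GDB.HasPath.cons ((hedge _ _ _).2 ⟨j, ?_, rfl, rfl⟩)
        (ih j.succ ?_ ?_) <;> first | simp; done | (rw [Fin.val_succ]; omega)

/-- for an RPQ view whose languages are recognized by a single complete
DFA `A` (with accepting sets `F t`), and a database `D` consisting of a single simple
path `x₀ a₁ x₁ ⋯ a_m x_m`, the relation `∼_k` is an equivalence relation on
`{x₀, …, x_k}` with at most `|S_V|` equivalence classes. -/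
theorem stmt12 {σ τ SV : Type} [Fintype σ] [Fintype SV] (A : DFA σ SV)
    (V : τ → Set (List σ)) (F : τ → Set SV)
    (hV : ∀ t w, w ∈ V t ↔ A.evalFrom A.start w ∈ F t)
    (m : ℕ) (x : Fin (m + 1) → ℕ) (a : Fin m → σ)
    (hinj : Function.Injective x)
    (D : GDB σ)
    (hnodes : (D.nodes : Set ℕ) = Set.range x)
    (hedge : ∀ (b : σ) (p q : ℕ),
        D.edge b p q ↔ ∃ i : Fin m, b = a i ∧ p = x i.castSucc ∧ q = x i.succ)
    (k : ℕ) (hk : k ≤ m) :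
    Equivalence (fun i j : {i : Fin (m + 1) // (i : ℕ) ≤ k} =>
        ∀ (t : τ) (r : Fin (m + 1)), k ≤ (r : ℕ) →
          (pathQuery (V t) D (x i.1) (x r) ↔ pathQuery (V t) D (x j.1) (x r))) ∧
    ∃ f : {i : Fin (m + 1) // (i : ℕ) ≤ k} → SV,
      ∀ i j : {i : Fin (m + 1) // (i : ℕ) ≤ k}, f i = f j →
        ∀ (t : τ) (r : Fin (m + 1)), k ≤ (r : ℕ) →
          (pathQuery (V t) D (x i.1) (x r) ↔ pathQuery (V t) D (x j.1) (x r)) := by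
  refine ⟨⟨fun _ _ _ _ => Iff.rfl, fun h t r hr => (h t r hr).symm,
    fun h h' t r hr => (h t r hr).trans (h' t r hr)⟩,
    fun i => A.evalFrom A.start (((List.ofFn a).take k).drop i.1), ?_⟩
  have key : ∀ (i : {i : Fin (m + 1) // (i : ℕ) ≤ k}) (t : τ) (r : Fin (m + 1)), k ≤ (r : ℕ) →
      (pathQuery (V t) D (x i.1) (x r) ↔
        A.evalFrom (A.evalFrom A.start (((List.ofFn a).take k).drop i.1))
          (((List.ofFn a).take r).drop k) ∈ F t) := by
    intro i t r hr
    have hi := i.2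
    -- The label of the segment from `x i` to `x r` splits at `x k`.
    have hsplit : ((List.ofFn a).take r).drop i.1 =
        ((List.ofFn a).take k).drop i.1 ++ ((List.ofFn a).take r).drop k := by
      conv_lhs => rw [← List.take_append_drop k ((List.ofFn a).take r)]
      rw [List.take_take, min_eq_left hr, List.drop_append_of_le_length]
      simp only [List.length_take, List.length_ofFn]
      omega
    rw [← DFA.evalFrom_of_append, ← hsplit, ← hV]
    constructor
    · rintro ⟨w, hw, hp⟩
      obtain ⟨-, rfl⟩ := (hasPath_iff hinj hnodes hedge _ _ _).1 hp
      exact hw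
    · exact fun hw => ⟨_, hw, (hasPath_iff hinj hnodes hedge _ _ _).2 ⟨hi.trans hr, rfl⟩⟩
  intro i j hij t r hr
  rw [key i t r hr, key j t r hr]
  dsimp only at hij
  rw [hij]
end

section
/- Let σ = {a} be a one-letter alphabet, let V = {V₁, V₂} be the RPQ view with L(V₁) = {a³} and L(V₂) = {a⁴}, and let Q be the RPQ with L(Q) = {a⁵}. Then there exist finite graph databases D and D' over σ such that V₁(D) ⊆ V₁(D') and V₂(D) ⊆ V₂(D'), but Q(D) ⊄ Q(D'). Consequently, the function induced by Q using V is not monotone. -/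
/-- Over the one-letter alphabet, the language of the single word `aⁿ`,
i.e. the words of length exactly `n`. -/
def lenLang (n : ℕ) : Set (List Unit) := {w | w.length = n}

/-- The simple path `0 → 1 → 2 → 3 → 4 → 5`. -/
def pathDB : GDB Unit where
  nodes := Finset.range 6
  edge _ x y := y = x + 1 ∧ x < 5
  edge_mem := by
    intro _ x y h
    simp only [Finset.mem_range]
    omega

/-- The edges of `detourDB`. -/
def detourEdges : List (ℕ × ℕ) :=
  [(0, 6), (6, 7), (7, 3), (3, 4), (1, 2), (2, 3), (2, 8), (8, 9), (9, 5)]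

/-- The path `0 → ⋯ → 5` with its first and last edges deleted and the detours
`0 → 6 → 7 → 3` and `2 → 8 → 9 → 5` added. -/
def detourDB : GDB Unit where
  nodes := Finset.range 10
  edge _ x y := (x, y) ∈ detourEdges
  edge_mem := by
    intro _ x y h
    simp only [detourEdges, List.mem_cons, Prod.mk.injEq, List.not_mem_nil, or_false] at h
    simp only [Finset.mem_range]
    omega

/-- A path in `pathDB` is determined by its start and its length. -/
theorem pathDB_hasPath {x y : ℕ} {w : List Unit} (h : pathDB.HasPath x w y) :
    y = x + w.length ∧ y ≤ 5 := by
  induction h with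
  | nil hx =>
    simp only [pathDB, Finset.mem_range] at hx
    simp only [List.length_nil]
    omega
  | cons he _ ih =>
    simp only [pathDB] at he
    simp only [List.length_cons]
    omega

/-- The set `{0, 6, 7, 3, 4}` is closed under the edges of `detourDB`, hence under paths. -/
theorem detourDB_reach {x y : ℕ} {w : List Unit} (h : detourDB.HasPath x w y)
    (hx : x ∈ [0, 6, 7, 3, 4]) : y ∈ [0, 6, 7, 3, 4] := by
  induction h with
  | nil _ => exact hx
  | cons he _ ih =>
    apply ih
    simp only [detourDB, detourEdges, List.mem_cons, Prod.mk.injEq, List.not_mem_nil,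
      or_false] at he hx ⊢
    omega

theorem pathQuery_three {D : GDB Unit} {x p q y : ℕ} (h₁ : D.edge () x p)
    (h₂ : D.edge () p q) (h₃ : D.edge () q y) : pathQuery (lenLang 3) D x y :=
  ⟨[(), (), ()], rfl, .cons h₁ (.cons h₂ (.cons h₃ (.nil (D.edge_mem _ _ _ h₃).2)))⟩

theorem pathQuery_four {D : GDB Unit} {x p q r y : ℕ} (h₁ : D.edge () x p)
    (h₂ : D.edge () p q) (h₃ : D.edge () q r) (h₄ : D.edge () r y) :
    pathQuery (lenLang 4) D x y :=
  ⟨[(), (), (), ()], rfl,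
    .cons h₁ (.cons h₂ (.cons h₃ (.cons h₄ (.nil (D.edge_mem _ _ _ h₄).2))))⟩

theorem detourDB_edge {x y : ℕ} (h : (x, y) ∈ detourEdges) : detourDB.edge () x y := h

/-- for the view `V = {V₁, V₂}` with `L(V₁) = a³`, `L(V₂) = a⁴` and the
query `Q = a⁵`, there are databases `D, D'` with `V(D) ⊆ V(D')` but `Q(D) ⊄ Q(D')`;
hence the function induced by `Q` using `V` is not monotone. -/
theorem stmt13 :
    ∃ D D' : GDB Unit,
      (∀ x y, pathQuery (lenLang 3) D x y → pathQuery (lenLang 3) D' x y) ∧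
      (∀ x y, pathQuery (lenLang 4) D x y → pathQuery (lenLang 4) D' x y) ∧
      ¬ (∀ x y, pathQuery (lenLang 5) D x y → pathQuery (lenLang 5) D' x y) := by
  refine ⟨pathDB, detourDB, ?_, ?_, ?_⟩
  · rintro x y ⟨w, hw, h⟩
    obtain ⟨rfl, hy⟩ := pathDB_hasPath h
    have hw : w.length = 3 := hw
    rw [hw] at hy ⊢
    obtain rfl | rfl | rfl : x = 0 ∨ x = 1 ∨ x = 2 := by omega
    · exact pathQuery_three (p := 6) (q := 7) (detourDB_edge (by decide))
        (detourDB_edge (by decide)) (detourDB_edge (by decide))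
    · exact pathQuery_three (p := 2) (q := 3) (detourDB_edge (by decide))
        (detourDB_edge (by decide)) (detourDB_edge (by decide))
    · exact pathQuery_three (p := 8) (q := 9) (detourDB_edge (by decide))
        (detourDB_edge (by decide)) (detourDB_edge (by decide))
  · rintro x y ⟨w, hw, h⟩
    obtain ⟨rfl, hy⟩ := pathDB_hasPath h
    have hw : w.length = 4 := hw
    rw [hw] at hy ⊢
    obtain rfl | rfl : x = 0 ∨ x = 1 := by omega
    · exact pathQuery_four (p := 6) (q := 7) (r := 3) (detourDB_edge (by decide))
        (detourDB_edge (by decide)) (detourDB_edge (by decide)) (detourDB_edge (by decide))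
    · exact pathQuery_four (p := 2) (q := 8) (r := 9) (detourDB_edge (by decide))
        (detourDB_edge (by decide)) (detourDB_edge (by decide)) (detourDB_edge (by decide))
  · intro H
    have e : ∀ x, x < 5 → pathDB.edge () x (x + 1) := fun x hx => ⟨rfl, hx⟩
    have h05 : pathQuery (lenLang 5) pathDB 0 5 :=
      ⟨[(), (), (), (), ()], rfl,
        .cons (e 0 (by decide)) (.cons (e 1 (by decide)) (.cons (e 2 (by decide))
          (.cons (e 3 (by decide)) (.cons (e 4 (by decide))
            (.nil (pathDB.edge_mem _ _ _ (e 4 (by decide))).2)))))⟩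
    obtain ⟨w, _, h⟩ := H 0 5 h05
    exact absurd (detourDB_reach h (by decide)) (by decide)
end

section
/- Let σ = {a} and let V = {V₁, V₂} be the RPQ view with L(V₁) = {a, aa} (words of length 1 or 2) and L(V₂) = {aa, aaa} (words of length 2 or 3). For a finite graph database D over σ, say that T(x,y) holds in V(D) if there exist nodes z₁, z₂ of D such that (x,z₁), (z₁,z₂), (z₂,y) all belong to both V₁(D) and V₂(D). Then for all nodes x, y of D: if T(x,y) holds in V(D), then either there is a path of length exactly 6 from x to y in D, or there are both a path of length exactly 5 and a path of length exactly 7 from x to y in D. -/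
/-- `L(V₁) = {a, aa}`: words of length 1 or 2 over the one-letter alphabet. -/
def V1lang : Set (List Unit) := {w | w.length = 1 ∨ w.length = 2}

/-- `L(V₂) = {aa, aaa}`: words of length 2 or 3 over the one-letter alphabet. -/
def V2lang : Set (List Unit) := {w | w.length = 2 ∨ w.length = 3}

/-- `T(x,y)` holds in `V(D)`: there are `z₁, z₂` with `(x,z₁)`, `(z₁,z₂)`, `(z₂,y)`
all in both `V₁(D)` and `V₂(D)`. -/
def Trel (D : GDB Unit) (x y : ℕ) : Prop :=
  ∃ z₁ z₂ : ℕ,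
    (pathQuery V1lang D x z₁ ∧ pathQuery V2lang D x z₁) ∧
    (pathQuery V1lang D z₁ z₂ ∧ pathQuery V2lang D z₁ z₂) ∧
    (pathQuery V1lang D z₂ y ∧ pathQuery V2lang D z₂ y)

theorem GDB.HasPath.append_s15 {σ : Type} {D : GDB σ} {x y z : ℕ} {u v : List σ}
    (h₁ : D.HasPath x u y) (h₂ : D.HasPath y v z) : D.HasPath x (u ++ v) z := by
  induction h₁ with
  | nil _ => exact h₂
  | cons e _ ih => exact .cons e (ih h₂)

/-- Over the one-letter alphabet a word is determined by its length. -/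
theorem GDB.HasPath.replicate_of_length {D : GDB Unit} {x y n : ℕ} {w : List Unit}
    (h : D.HasPath x w y) (hw : w.length = n) : D.HasPath x (List.replicate n ()) y := by
  have : w = List.replicate n () := List.eq_replicate_iff.2 ⟨hw, fun _ _ => rfl⟩
  exact this ▸ h

theorem GDB.HasPath.replicate_trans {D : GDB Unit} {x y z m n : ℕ}
    (h₁ : D.HasPath x (List.replicate m ()) y) (h₂ : D.HasPath y (List.replicate n ()) z) :
    D.HasPath x (List.replicate (m + n) ()) z :=
  (h₁.append_s15 h₂).replicate_of_length (by simp)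

/-- If neither view is witnessed by a path of length 2, then `V₁` forces one of length 1 and `V₂`
one of length 3. -/
theorem hop_lengths {D : GDB Unit} {x y : ℕ}
    (h : pathQuery V1lang D x y ∧ pathQuery V2lang D x y) :
    D.HasPath x (List.replicate 2 ()) y ∨
      (D.HasPath x (List.replicate 1 ()) y ∧ D.HasPath x (List.replicate 3 ()) y) := by
  obtain ⟨⟨w₁, hw₁ | hw₁, p₁⟩, ⟨w₂, hw₂ | hw₂, p₂⟩⟩ := h
  · exact .inl (p₂.replicate_of_length hw₂)
  · exact .inr ⟨p₁.replicate_of_length hw₁, p₂.replicate_of_length hw₂⟩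
  · exact .inl (p₂.replicate_of_length hw₂)
  · exact .inl (p₁.replicate_of_length hw₁)

/-- if `T(x,y)` holds in `V(D)` then either there is a path of length 6
from `x` to `y` in `D`, or there are both a path of length 5 and a path of length 7. -/
theorem stmt15 (D : GDB Unit) (x y : ℕ) (h : Trel D x y) :
    D.HasPath x (List.replicate 6 ()) y ∨
      (D.HasPath x (List.replicate 5 ()) y ∧ D.HasPath x (List.replicate 7 ()) y) := by
  obtain ⟨z₁, z₂, h₁, h₂, h₃⟩ := h
  rcases hop_lengths h₁ with a | ⟨a, a'⟩ <;> rcases hop_lengths h₂ with b | ⟨b, b'⟩ <;>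
    rcases hop_lengths h₃ with c | ⟨c, c'⟩
  · exact .inl ((a.replicate_trans b).replicate_trans c)
  · exact .inr ⟨(a.replicate_trans b).replicate_trans c, (a.replicate_trans b).replicate_trans c'⟩
  · exact .inr ⟨(a.replicate_trans b).replicate_trans c, (a.replicate_trans b').replicate_trans c⟩
  · exact .inl ((a.replicate_trans b).replicate_trans c')
  · exact .inr ⟨(a.replicate_trans b).replicate_trans c, (a'.replicate_trans b).replicate_trans c⟩
  · exact .inl ((a.replicate_trans b).replicate_trans c')
  · exact .inl ((a.replicate_trans b').replicate_trans c)
  · exact .inr ⟨(a.replicate_trans b).replicate_trans c', (a.replicate_trans b').replicate_trans c'⟩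
end
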